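/- arXiv:2511.08543 — 2 statements merged into one kernel-verified Lean document; each statement's English description precedes it below -/
import Mathlib

section
/- Let N_A, N_B ≥ 1 and m ≥ 1 be integers, and set μ_m := ∏_{i=0}^{m−1} (N_A+i)/(N_A·N_B+i). Then N_B^{−m} ≤ μ_m ≤ N_B^{−m}·e^{m²/N_A}; in particular the Jensen gap satisfies 0 ≤ μ_m − N_B^{−m} ≤ N_B^{−m}·(e^{m²/N_A} − 1). -/
/-! Since `N_B ≥ 1`, each factor of `μ_m` satisfies
`1 / N_B ≤ (N_A + i) / (N_A N_B + i) ≤ (1 / N_B) (1 + i / N_A)`. Multiplying over `i < m` and using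
`1 + x ≤ exp x`, the upper bound becomes `N_B⁻ᵐ exp (∑ i / N_A)`, and the `m` terms of the exponent
are each at most `m / N_A`. -/

open MeasureTheory Matrix
open scoped ComplexOrder

noncomputable section

/-- The Haar moment `μ_m = E_{Φ∼Haar}[q_z^m] = ∏_{i=0}^{m−1}(N_A+i)/(N_A·N_B+i)`. -/
def haarQMoment (NA NB m : ℕ) : ℝ :=
  ∏ i ∈ Finset.range m, ((NA : ℝ) + i) / ((NA : ℝ) * NB + i)

section Field

variable {K : Type*} [Field K] [LinearOrder K] [IsStrictOrderedRing K] {a b t : K}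

theorem inv_le_add_div_mul_add (ha : 0 < a) (hb : 1 ≤ b) (ht : 0 ≤ t) :
    b⁻¹ ≤ (a + t) / (a * b + t) := by
  have hb₀ : 0 < b := one_pos.trans_le hb
  rw [inv_eq_one_div, div_le_div_iff₀ hb₀ (by positivity)]
  calc 1 * (a * b + t) = a * b + t * 1 := by ring
    _ ≤ a * b + t * b := by gcongr
    _ = (a + t) * b := by ring

theorem add_div_mul_add_le_inv_mul (ha : 0 < a) (hb : 0 < b) (ht : 0 ≤ t) :
    (a + t) / (a * b + t) ≤ b⁻¹ * (1 + t / a) := by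
  calc (a + t) / (a * b + t) ≤ (a + t) / (a * b) := by
        gcongr
        exact le_add_of_nonneg_right ht
    _ = b⁻¹ * (1 + t / a) := by field_simp

theorem inv_pow_card_le_prod_add_div_mul_add {ι : Type*} {s : Finset ι} {f : ι → K}
    (ha : 0 < a) (hb : 1 ≤ b) (hf : ∀ i ∈ s, 0 ≤ f i) :
    (b ^ s.card)⁻¹ ≤ ∏ i ∈ s, (a + f i) / (a * b + f i) := by
  rw [← inv_pow, ← Finset.prod_const]
  exact Finset.prod_le_prod (fun _ _ ↦ inv_nonneg.2 (zero_le_one.trans hb))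
    fun i hi ↦ inv_le_add_div_mul_add ha hb (hf i hi)

theorem sum_range_natCast_div_le_sq_div (ha : 0 ≤ a) (m : ℕ) :
    ∑ i ∈ Finset.range m, (i : K) / a ≤ (m : K) ^ 2 / a := by
  calc ∑ i ∈ Finset.range m, (i : K) / a ≤ ∑ _i ∈ Finset.range m, (m : K) / a := by
        gcongr with i hi
        exact (Finset.mem_range.1 hi).le
    _ = (m : K) ^ 2 / a := by
        rw [Finset.sum_const, Finset.card_range, nsmul_eq_mul, sq, mul_div_assoc]

end Field

theorem prod_add_div_mul_add_le_inv_pow_card_mul_exp {ι : Type*} {s : Finset ι} {f : ι → ℝ}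
    {a b : ℝ} (ha : 0 < a) (hb : 0 < b) (hf : ∀ i ∈ s, 0 ≤ f i) :
    ∏ i ∈ s, (a + f i) / (a * b + f i) ≤ (b ^ s.card)⁻¹ * Real.exp (∑ i ∈ s, f i / a) := by
  calc ∏ i ∈ s, (a + f i) / (a * b + f i) ≤ ∏ i ∈ s, b⁻¹ * (1 + f i / a) := by
        refine Finset.prod_le_prod (fun i hi ↦ ?_)
          fun i hi ↦ add_div_mul_add_le_inv_mul ha hb (hf i hi)
        have := hf i hi
        positivity
    _ = (b ^ s.card)⁻¹ * ∏ i ∈ s, (1 + f i / a) := by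
        rw [Finset.prod_mul_distrib, Finset.prod_const, inv_pow]
    _ ≤ (b ^ s.card)⁻¹ * Real.exp (∑ i ∈ s, f i / a) := by
        rw [Real.exp_sum]
        gcongr with i
        · exact fun i hi ↦ add_nonneg zero_le_one (div_nonneg (hf i hi) ha.le)
        · exact (add_comm 1 (f i / a)).trans_le (Real.add_one_le_exp _)

theorem haarQMoment_bounds_general {a b : ℝ} (ha : 0 < a) (hb : 1 ≤ b) (m : ℕ) :
    (b ^ m)⁻¹ ≤ ∏ i ∈ Finset.range m, (a + i) / (a * b + i) ∧
      ∏ i ∈ Finset.range m, (a + i) / (a * b + i) ≤ (b ^ m)⁻¹ * Real.exp ((m : ℝ) ^ 2 / a) := by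
  have hb₀ : 0 < b := one_pos.trans_le hb
  have cast_nonneg : ∀ i ∈ Finset.range m, (0 : ℝ) ≤ i := fun i _ ↦ i.cast_nonneg
  constructor
  · simpa only [Finset.card_range] using inv_pow_card_le_prod_add_div_mul_add ha hb cast_nonneg
  · calc ∏ i ∈ Finset.range m, (a + i) / (a * b + i)
        ≤ (b ^ m)⁻¹ * Real.exp (∑ i ∈ Finset.range m, (i : ℝ) / a) := by
          simpa only [Finset.card_range] using
            prod_add_div_mul_add_le_inv_pow_card_mul_exp ha hb₀ cast_nonneg
      _ ≤ (b ^ m)⁻¹ * Real.exp ((m : ℝ) ^ 2 / a) := by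
          gcongr
          exact sum_range_natCast_div_le_sq_div ha.le m

/-- `N_B^{−m} ≤ μ_m ≤ N_B^{−m} e^{m²/N_A}`; in particular the Jensen
gap satisfies `0 ≤ μ_m − N_B^{−m} ≤ N_B^{−m}(e^{m²/N_A} − 1)`. -/
theorem haarQMoment_bounds (NA NB m : ℕ) (hNA : 1 ≤ NA) (hNB : 1 ≤ NB) (hm : 1 ≤ m) :
    (((NB : ℝ)) ^ m)⁻¹ ≤ haarQMoment NA NB m ∧
      haarQMoment NA NB m ≤ (((NB : ℝ)) ^ m)⁻¹ * Real.exp ((m : ℝ) ^ 2 / NA) ∧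
      0 ≤ haarQMoment NA NB m - (((NB : ℝ)) ^ m)⁻¹ ∧
      haarQMoment NA NB m - (((NB : ℝ)) ^ m)⁻¹
        ≤ (((NB : ℝ)) ^ m)⁻¹ * (Real.exp ((m : ℝ) ^ 2 / NA) - 1) := by
  obtain ⟨lower, upper⟩ : (_ ≤ haarQMoment NA NB m) ∧ (haarQMoment NA NB m ≤ _) :=
    haarQMoment_bounds_general (Nat.cast_pos.2 hNA) (Nat.one_le_cast.2 hNB) m
  exact ⟨lower, upper, sub_nonneg.2 lower, by linarith⟩

end
end

section
/- For every real x ≥ 1, |J_1(x)| < 1/√x, where J_1 is the Bessel function of the first kind of order 1, given by the integral representation J_1(x) = (1/π) ∫_0^π cos(τ − x·sin τ) dτ. -/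
/-!
The function `u(x) = √x J₁(x)` satisfies `u'' + q u = 0` with `q(x) = 1 - 3/(4x²)`. Since `q`
increases, Sonine's energy `u² + u'²/q` decreases as long as `q > 0`, so its value at `3/2` bounds
`x J₁(x)²` for all `x ≥ 3/2`. Integrating `J₀' = -J₁` and `(x J₁)' = x J₀` alternately, starting
from `J₀ ≤ 1`, encloses `J₀` and `J₁` between consecutive partial sums of their power series. This
shows that the energy at `3/2` is less than `1`, and for `0 < x ≤ 3/2` already `0 ≤ J₁(x) ≤ x/2`
suffices.
-/

noncomputable section

/-- The Bessel function of the first kind of order 1, via Bessel's integral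
representation `J₁(x) = (1/π) ∫₀^π cos(τ − x sin τ) dτ`. -/
def besselJ1 (x : ℝ) : ℝ :=
  (1 / Real.pi) * ∫ τ in (0 : ℝ)..Real.pi, Real.cos (τ - x * Real.sin τ)

open Real Set
open scoped Nat

section Sonine

variable {q y y' : ℝ → ℝ}

/-- Sonine's energy `y² + y'²/q` of a solution `y` of `y'' + q y = 0`; the derivative of `y` is
passed as the separate function `y'`. -/
def sonineEnergy (q y y' : ℝ → ℝ) (x : ℝ) : ℝ :=
  y x ^ 2 + y' x ^ 2 / q x

lemma hasDerivAt_sonineEnergy {q' x : ℝ} (hy : HasDerivAt y (y' x) x)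
    (hy' : HasDerivAt y' (-(q x * y x)) x) (hq : HasDerivAt q q' x) (hx : q x ≠ 0) :
    HasDerivAt (sonineEnergy q y y') (-(q' * (y' x / q x) ^ 2)) x := by
  refine ((hy.fun_pow 2).fun_add ((hy'.fun_pow 2).fun_div hq hx)).congr_deriv ?_
  field_simp
  ring

theorem antitoneOn_sonineEnergy {q' : ℝ → ℝ} {s : Set ℝ} (hs : Convex ℝ s)
    (hy : ∀ x ∈ s, HasDerivAt y (y' x) x) (hy' : ∀ x ∈ s, HasDerivAt y' (-(q x * y x)) x)
    (hq : ∀ x ∈ s, HasDerivAt q (q' x) x) (hpos : ∀ x ∈ s, 0 < q x) (hq' : ∀ x ∈ s, 0 ≤ q' x) :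
    AntitoneOn (sonineEnergy q y y') s := by
  have hderiv (x) (hx : x ∈ s) :
      HasDerivAt (sonineEnergy q y y') (-(q' x * (y' x / q x) ^ 2)) x :=
    hasDerivAt_sonineEnergy (hy x hx) (hy' x hx) (hq x hx) (hpos x hx).ne'
  refine antitoneOn_of_hasDerivWithinAt_nonpos hs
    (fun x hx => (hderiv x hx).continuousAt.continuousWithinAt)
    (fun x hx => (hderiv x (interior_subset hx)).hasDerivWithinAt) fun x hx => ?_
  exact neg_nonpos.2 (mul_nonneg (hq' x (interior_subset hx)) (sq_nonneg _))

end Sonine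

section BesselEquation

variable {ν : ℝ} {f f' : ℝ → ℝ}

/-- The potential `q` of the Liouville normal form `u'' + q u = 0` of Bessel's equation of order
`ν`, which `u(x) = √x f(x)` satisfies when `f` solves Bessel's equation. -/
def besselPotential (ν x : ℝ) : ℝ :=
  1 - (ν ^ 2 - 1 / 4) / x ^ 2

lemma hasDerivAt_besselPotential (ν : ℝ) {x : ℝ} (hx : x ≠ 0) :
    HasDerivAt (besselPotential ν) (2 * (ν ^ 2 - 1 / 4) / x ^ 3) x := by
  refine (((hasDerivAt_const x (ν ^ 2 - 1 / 4)).fun_div (hasDerivAt_pow 2 x)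
    (pow_ne_zero 2 hx)).const_sub 1).congr_deriv ?_
  field_simp
  ring

lemma besselPotential_pos {x : ℝ} (hx : x ≠ 0) (hν : ν ^ 2 - 1 / 4 < x ^ 2) :
    0 < besselPotential ν x :=
  sub_pos.2 ((div_lt_one (by positivity)).2 hν)

lemma hasDerivAt_sqrt_mul {f₀' x : ℝ} (hx : 0 < x) (hf : HasDerivAt f f₀' x) :
    HasDerivAt (fun t => √t * f t) (√x * f₀' + f x / (2 * √x)) x :=
  ((hasDerivAt_sqrt hx.ne').fun_mul hf).congr_deriv (by ring)

/-- `f` solves Bessel's equation `x² f'' + x f' + (x² - ν²) f = 0` on the positive half-line; the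
derivative of `f` is passed as the separate function `f'`, and the equation is solved for `f''`. -/
structure IsBesselSolution (ν : ℝ) (f f' : ℝ → ℝ) : Prop where
  hasDerivAt {x : ℝ} (hx : 0 < x) : HasDerivAt f (f' x) x
  hasDerivAt_deriv {x : ℝ} (hx : 0 < x) :
    HasDerivAt f' (-(f' x / x) - (1 - ν ^ 2 / x ^ 2) * f x) x

lemma IsBesselSolution.hasDerivAt_deriv_sqrt_mul (h : IsBesselSolution ν f f') {x : ℝ}
    (hx : 0 < x) :
    HasDerivAt (fun t => √t * f' t + f t / (2 * √t)) (-(besselPotential ν x * (√x * f x))) x := by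
  have hsqrt : 0 < √x := sqrt_pos.2 hx
  refine ((hasDerivAt_sqrt_mul hx (h.hasDerivAt_deriv hx)).fun_add ((h.hasDerivAt hx).fun_div
    ((hasDerivAt_sqrt hx.ne').const_mul 2) (by positivity))).congr_deriv ?_
  obtain ⟨s, hs, rfl⟩ : ∃ s, 0 < s ∧ x = s ^ 2 := ⟨√x, hsqrt, (sq_sqrt hx.le).symm⟩
  rw [sqrt_sq hs.le, besselPotential]
  field_simp
  ring

/-- Sonine's energy of `u(x) = √x f(x)`, for a solution `f` of Bessel's equation of order `ν` with
derivative `f'`. -/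
def besselEnergy (ν : ℝ) (f f' : ℝ → ℝ) : ℝ → ℝ :=
  sonineEnergy (besselPotential ν) (fun t => √t * f t) (fun t => √t * f' t + f t / (2 * √t))

theorem IsBesselSolution.antitoneOn_besselEnergy (h : IsBesselSolution ν f f')
    (hν : 1 / 4 ≤ ν ^ 2) {a : ℝ} (ha : 0 < a) (haν : ν ^ 2 - 1 / 4 < a ^ 2) :
    AntitoneOn (besselEnergy ν f f') (Ici a) := by
  have hpos (t) (ht : t ∈ Ici a) : 0 < t := ha.trans_le ht
  exact antitoneOn_sonineEnergy (convex_Ici a)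
    (fun t ht => hasDerivAt_sqrt_mul (hpos t ht) (h.hasDerivAt (hpos t ht)))
    (fun t ht => h.hasDerivAt_deriv_sqrt_mul (hpos t ht))
    (fun t ht => hasDerivAt_besselPotential ν (hpos t ht).ne')
    (fun t ht => besselPotential_pos (hpos t ht).ne' (haν.trans_le (pow_le_pow_left₀ ha.le ht 2)))
    (fun t ht => div_nonneg (by linarith) (pow_nonneg (hpos t ht).le 3))

lemma besselEnergy_eq (ν : ℝ) (f f' : ℝ → ℝ) {x : ℝ} (hx : 0 < x) :
    besselEnergy ν f f' x
      = x * f x ^ 2 + (x * f' x + f x / 2) ^ 2 / (x * besselPotential ν x) := by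
  have hslope : √x * f' x + f x / (2 * √x) = (x * f' x + f x / 2) / √x := by
    have hsqrt : √x ≠ 0 := (sqrt_pos.2 hx).ne'
    field_simp
    rw [sq_sqrt hx.le]
    ring
  rw [besselEnergy, sonineEnergy, hslope, mul_pow, div_pow, sq_sqrt hx.le, div_div]

lemma mul_sq_le_besselEnergy (f f' : ℝ → ℝ) {x : ℝ} (hx : 0 < x) (hν : ν ^ 2 - 1 / 4 < x ^ 2) :
    x * f x ^ 2 ≤ besselEnergy ν f f' x := by
  have hq := besselPotential_pos hx.ne' hν
  rw [besselEnergy_eq ν f f' hx]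
  exact le_add_of_nonneg_right (by positivity)

end BesselEquation

section BesselJ

/-- The Bessel function of the first kind of integer order `n`, via Bessel's integral
representation. -/
def besselJ (n : ℤ) (x : ℝ) : ℝ :=
  (1 / π) * ∫ τ in (0 : ℝ)..π, cos (n * τ - x * sin τ)

lemma besselJ_one : besselJ 1 = besselJ1 := by
  simp only [besselJ, besselJ1, Int.cast_one, one_mul, funext_iff, implies_true]

lemma besselJ_zero_zero : besselJ 0 0 = 1 := by
  simp [besselJ, pi_ne_zero]

lemma abs_besselJ_le_one (n : ℤ) (x : ℝ) : |besselJ n x| ≤ 1 := by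
  have h : ‖∫ τ in (0 : ℝ)..π, cos (n * τ - x * sin τ)‖ ≤ 1 * |π - 0| :=
    intervalIntegral.norm_integral_le_of_norm_le_const fun τ _ => abs_cos_le_one _
  rw [one_mul, sub_zero, abs_of_pos pi_pos, norm_eq_abs] at h
  rwa [besselJ, abs_mul, abs_of_pos (one_div_pos.2 pi_pos), one_div, inv_mul_le_iff₀ pi_pos,
    mul_one]

lemma besselJ_neg (n : ℤ) (x : ℝ) : besselJ (-n) x = (-1) ^ n * besselJ n x := by
  have hreflect (τ : ℝ) : cos ((-n : ℤ) * (π - τ) - x * sin (π - τ))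
      = (-1) ^ n * cos (n * τ - x * sin τ) := by
    rw [← cos_sub_int_mul_pi, sin_pi_sub]
    push_cast
    ring_nf
  have hint := intervalIntegral.integral_comp_sub_left (a := 0) (b := π)
    (fun τ => cos ((-n : ℤ) * τ - x * sin τ)) π
  simp only [hreflect, intervalIntegral.integral_const_mul, sub_self, sub_zero] at hint
  rw [besselJ, besselJ, ← hint]
  ring

lemma besselJ_sub_one_add_besselJ_add_one (n : ℤ) (x : ℝ) :
    besselJ (n - 1) x + besselJ (n + 1) x
      = (2 / π) * ∫ τ in (0 : ℝ)..π, cos τ * cos (n * τ - x * sin τ) := by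
  have hsum (τ : ℝ) : cos ((n - 1 : ℤ) * τ - x * sin τ) + cos ((n + 1 : ℤ) * τ - x * sin τ)
      = 2 * (cos τ * cos (n * τ - x * sin τ)) := by
    rw [← mul_assoc, two_mul_cos_mul_cos, ← cos_neg (τ - _)]
    push_cast
    ring_nf
  rw [besselJ, besselJ, ← mul_add, ← intervalIntegral.integral_add]
  · simp only [hsum, intervalIntegral.integral_const_mul]
    ring
  all_goals exact (by fun_prop : Continuous _).intervalIntegrable _ _

lemma besselJ_sub_one_sub_besselJ_add_one (n : ℤ) (x : ℝ) :
    besselJ (n - 1) x - besselJ (n + 1) x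
      = (2 / π) * ∫ τ in (0 : ℝ)..π, sin τ * sin (n * τ - x * sin τ) := by
  have hdiff (τ : ℝ) : cos ((n - 1 : ℤ) * τ - x * sin τ) - cos ((n + 1 : ℤ) * τ - x * sin τ)
      = 2 * (sin τ * sin (n * τ - x * sin τ)) := by
    rw [← mul_assoc, two_mul_sin_mul_sin, ← cos_neg (τ - _)]
    push_cast
    ring_nf
  rw [besselJ, besselJ, ← mul_sub, ← intervalIntegral.integral_sub]
  · simp only [hdiff, intervalIntegral.integral_const_mul]
    ring
  all_goals exact (by fun_prop : Continuous _).intervalIntegrable _ _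

lemma mul_besselJ_sub_one_add_besselJ_add_one (n : ℤ) (x : ℝ) :
    x * (besselJ (n - 1) x + besselJ (n + 1) x) = 2 * n * besselJ n x := by
  have hexact : ∫ τ in (0 : ℝ)..π, (n * cos (n * τ - x * sin τ)
      - x * (cos τ * cos (n * τ - x * sin τ))) = 0 := by
    rw [intervalIntegral.integral_eq_sub_of_hasDerivAt (f := fun τ => sin (n * τ - x * sin τ))]
    · simp
    · exact fun τ _ => ((((hasDerivAt_id τ).const_mul (n : ℝ)).fun_sub
        ((hasDerivAt_sin τ).const_mul x)).sin).congr_deriv (by simp only [id]; ring)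
    · exact (by fun_prop : Continuous _).intervalIntegrable _ _
  rw [intervalIntegral.integral_sub, intervalIntegral.integral_const_mul,
    intervalIntegral.integral_const_mul] at hexact
  · rw [besselJ_sub_one_add_besselJ_add_one, besselJ]
    linear_combination (-2 / π) * hexact
  all_goals exact (by fun_prop : Continuous _).intervalIntegrable _ _

lemma hasDerivAt_integral_cos_sub_mul {θ g : ℝ → ℝ} (hθ : Continuous θ) (hg : Continuous g)
    (a b x : ℝ) : HasDerivAt (fun x => ∫ τ in a..b, cos (θ τ - x * g τ))
      (∫ τ in a..b, g τ * sin (θ τ - x * g τ)) x := by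
  refine (intervalIntegral.hasDerivAt_integral_of_dominated_loc_of_deriv_le
    (F := fun x τ => cos (θ τ - x * g τ)) (F' := fun x τ => g τ * sin (θ τ - x * g τ))
    (bound := fun τ => |g τ|) Filter.univ_mem (.of_forall fun y => ?_) ?_ ?_
    (.of_forall fun τ _ y _ => ?_) ?_ (.of_forall fun τ _ y _ => ?_)).2
  · exact (by fun_prop : Continuous _).aestronglyMeasurable
  · exact (by fun_prop : Continuous _).intervalIntegrable _ _
  · exact (by fun_prop : Continuous _).aestronglyMeasurable
  · rw [norm_mul]
    exact mul_le_of_le_one_right (abs_nonneg _) (abs_sin_le_one _)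
  · exact hg.abs.intervalIntegrable _ _
  · exact (((hasDerivAt_mul_const (g τ)).const_sub (θ τ)).cos).congr_deriv (by ring)

lemma hasDerivAt_besselJ (n : ℤ) (x : ℝ) :
    HasDerivAt (besselJ n) ((besselJ (n - 1) x - besselJ (n + 1) x) / 2) x := by
  refine ((hasDerivAt_integral_cos_sub_mul (θ := fun τ => n * τ) (by fun_prop) continuous_sin
    0 π x).const_mul (1 / π)).congr_deriv ?_
  rw [besselJ_sub_one_sub_besselJ_add_one]
  ring

lemma hasDerivAt_besselJ_zero (x : ℝ) : HasDerivAt (besselJ 0) (-besselJ 1 x) x := by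
  refine (hasDerivAt_besselJ 0 x).congr_deriv ?_
  rw [zero_sub, zero_add, besselJ_neg, zpow_one]
  ring

lemma hasDerivAt_pow_mul_besselJ (n : ℕ) (x : ℝ) :
    HasDerivAt (fun t => t ^ (n + 1) * besselJ (n + 1) t) (x ^ (n + 1) * besselJ n x) x := by
  refine ((hasDerivAt_pow (n + 1) x).fun_mul (hasDerivAt_besselJ (n + 1) x)).congr_deriv ?_
  have h := mul_besselJ_sub_one_add_besselJ_add_one (n + 1) x
  rw [add_sub_cancel_right] at h ⊢
  push_cast [add_tsub_cancel_right] at h ⊢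
  linear_combination (-x ^ n / 2) * h

lemma isBesselSolution_besselJ (n : ℤ) :
    IsBesselSolution n (besselJ n) (fun x => (besselJ (n - 1) x - besselJ (n + 1) x) / 2) where
  hasDerivAt _ := hasDerivAt_besselJ n _
  hasDerivAt_deriv {x} hx := by
    refine (((hasDerivAt_besselJ (n - 1) x).fun_sub
      (hasDerivAt_besselJ (n + 1) x)).div_const 2).congr_deriv ?_
    have h := mul_besselJ_sub_one_add_besselJ_add_one n x
    have hpred := mul_besselJ_sub_one_add_besselJ_add_one (n - 1) x
    have hsucc := mul_besselJ_sub_one_add_besselJ_add_one (n + 1) x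
    rw [sub_add_cancel] at hpred ⊢
    rw [add_sub_cancel_right] at hsucc ⊢
    push_cast at hpred hsucc
    field_simp
    linear_combination x * hpred + x * hsucc + 2 * n * h

end BesselJ

section PowerSeries

/-- The sum of the first `N` terms of the power series of the Bessel function `J_n`. -/
def besselPartialSum (n N : ℕ) (x : ℝ) : ℝ :=
  ∑ m ∈ Finset.range N, (-1) ^ m / (m ! * (m + n)!) * (x / 2) ^ (2 * m + n)

lemma hasDerivAt_pow_mul_besselPartialSum (n N : ℕ) (x : ℝ) :
    HasDerivAt (fun t => t ^ (n + 1) * besselPartialSum (n + 1) N t)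
      (x ^ (n + 1) * besselPartialSum n N x) x := by
  simp only [besselPartialSum, Finset.mul_sum]
  refine HasDerivAt.fun_sum fun m _ => ?_
  refine ((hasDerivAt_pow (n + 1) x).fun_mul ((((hasDerivAt_id' x).div_const 2).fun_pow
    (2 * m + (n + 1))).const_mul ((-1) ^ m / (m ! * (m + (n + 1))! : ℝ)))).congr_deriv ?_
  rw [← add_assoc m n 1, Nat.factorial_succ]
  push_cast [← add_assoc (2 * m) n 1, add_tsub_cancel_right]
  field_simp
  ring

lemma hasDerivAt_besselPartialSum_zero (N : ℕ) (x : ℝ) :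
    HasDerivAt (besselPartialSum 0 (N + 1)) (-besselPartialSum 1 N x) x := by
  unfold besselPartialSum
  simp only [Finset.sum_range_succ' _ N, ← Finset.sum_neg_distrib, mul_zero, add_zero, pow_zero]
  rw [hasDerivAt_add_const_iff]
  refine HasDerivAt.fun_sum fun m _ => ?_
  refine ((((hasDerivAt_id' x).div_const 2).fun_pow (2 * (m + 1))).const_mul
    ((-1) ^ (m + 1) / ((m + 1)! * (m + 1)! : ℝ))).congr_deriv ?_
  rw [Nat.factorial_succ, show 2 * (m + 1) - 1 = 2 * m + 1 by omega]
  push_cast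
  field_simp
  ring

/-- The remainder of the power series of `J_n` after `N + 1` terms, with the sign that makes it
nonnegative on the positive half-line, see `besselRemainder_nonneg`. -/
def besselRemainder (n N : ℕ) (x : ℝ) : ℝ :=
  (-1) ^ N * (besselPartialSum n (N + 1) x - besselJ n x)

lemma hasDerivAt_pow_mul_besselRemainder (n N : ℕ) (x : ℝ) :
    HasDerivAt (fun t => t ^ (n + 1) * besselRemainder (n + 1) N t)
      (x ^ (n + 1) * besselRemainder n N x) x := by
  convert! ((hasDerivAt_pow_mul_besselPartialSum n (N + 1) x).fun_sub
    (hasDerivAt_pow_mul_besselJ n x)).const_mul ((-1 : ℝ) ^ N) using 1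
  · ext t
    rw [besselRemainder]
    push_cast
    ring
  · rw [besselRemainder]
    ring

lemma hasDerivAt_besselRemainder_zero (N : ℕ) (x : ℝ) :
    HasDerivAt (besselRemainder 0 (N + 1)) (besselRemainder 1 N x) x := by
  refine (((hasDerivAt_besselPartialSum_zero (N + 1) x).fun_sub
    (hasDerivAt_besselJ_zero x)).const_mul ((-1 : ℝ) ^ (N + 1))).congr_deriv ?_
  rw [besselRemainder, Nat.cast_one]
  ring

lemma besselRemainder_zero_zero (N : ℕ) : besselRemainder 0 N 0 = 0 := by
  simp [besselRemainder, besselPartialSum, Finset.sum_range_succ', besselJ_zero_zero]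

lemma nonneg_of_hasDerivAt_nonneg {f f' : ℝ → ℝ} {a x : ℝ} (hf : ∀ t ≥ a, HasDerivAt f (f' t) t)
    (hf' : ∀ t > a, 0 ≤ f' t) (ha : 0 ≤ f a) (hx : a ≤ x) : 0 ≤ f x := by
  have hmono : MonotoneOn f (Ici a) :=
    monotoneOn_of_hasDerivWithinAt_nonneg (convex_Ici a)
      (fun t ht => (hf t ht).continuousAt.continuousWithinAt)
      (fun t ht => (hf t (interior_subset ht)).hasDerivWithinAt)
      (fun t ht => hf' t (by rwa [interior_Ici] at ht))
  exact ha.trans (hmono self_mem_Ici hx hx)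

lemma besselRemainder_succ_nonneg {n N : ℕ} (h : ∀ t > 0, 0 ≤ besselRemainder n N t) {x : ℝ}
    (hx : 0 < x) : 0 ≤ besselRemainder (n + 1) N x := by
  refine (mul_nonneg_iff_of_pos_left (pow_pos hx (n + 1))).1 ?_
  exact nonneg_of_hasDerivAt_nonneg (f := fun t => t ^ (n + 1) * besselRemainder (n + 1) N t)
    (fun t _ => hasDerivAt_pow_mul_besselRemainder n N t)
    (fun t ht => mul_nonneg (pow_nonneg ht.le _) (h t ht)) (by simp) hx.le

lemma besselRemainder_zero_nonneg (N : ℕ) {x : ℝ} (hx : 0 < x) : 0 ≤ besselRemainder 0 N x := by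
  induction N generalizing x with
  | zero =>
    simpa [besselRemainder, besselPartialSum] using (abs_le.1 (abs_besselJ_le_one 0 x)).2
  | succ N ih =>
    exact nonneg_of_hasDerivAt_nonneg (fun t _ => hasDerivAt_besselRemainder_zero N t)
      (fun t ht => besselRemainder_succ_nonneg (fun s hs => ih hs) ht)
      (besselRemainder_zero_zero _).ge hx.le

theorem besselRemainder_nonneg (n N : ℕ) {x : ℝ} (hx : 0 < x) : 0 ≤ besselRemainder n N x := by
  induction n generalizing x with
  | zero => exact besselRemainder_zero_nonneg N hx
  | succ n ih => exact besselRemainder_succ_nonneg (fun t ht => ih ht) hx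

lemma besselJ_le_besselPartialSum (n : ℕ) {N : ℕ} (hN : Odd N) {x : ℝ} (hx : 0 < x) :
    besselJ n x ≤ besselPartialSum n N x := by
  obtain ⟨k, rfl⟩ := hN
  simpa [besselRemainder] using besselRemainder_nonneg n (2 * k) hx

lemma besselPartialSum_le_besselJ (n : ℕ) {N : ℕ} (hN : Even N) (hN₀ : N ≠ 0) {x : ℝ}
    (hx : 0 < x) : besselPartialSum n N x ≤ besselJ n x := by
  obtain ⟨k, rfl⟩ := Nat.exists_eq_succ_of_ne_zero hN₀
  have hk : Odd k := by rwa [Nat.succ_eq_add_one, Nat.even_add_one, Nat.not_even_iff_odd] at hN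
  simpa [besselRemainder, hk.neg_one_pow] using besselRemainder_nonneg n k hx

end PowerSeries

lemma besselJ_one_le_half {x : ℝ} (hx : 0 < x) : besselJ 1 x ≤ x / 2 := by
  simpa [besselPartialSum] using besselJ_le_besselPartialSum 1 odd_one hx

lemma sub_le_besselJ_one {x : ℝ} (hx : 0 < x) : x / 2 - x ^ 3 / 16 ≤ besselJ 1 x := by
  have h := besselPartialSum_le_besselJ 1 (N := 2) even_two two_ne_zero hx
  norm_num [besselPartialSum, Finset.sum_range_succ] at h
  linarith

lemma mul_besselJ_one_sq_lt_one_of_le {x : ℝ} (hx : 0 < x) (hx' : x ≤ 3 / 2) :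
    x * besselJ 1 x ^ 2 < 1 := by
  have hnonneg : 0 ≤ besselJ 1 x := by
    have hcubic : 0 ≤ x * (8 - x ^ 2) := mul_nonneg hx.le (by nlinarith)
    linarith [sub_le_besselJ_one hx]
  calc x * besselJ 1 x ^ 2 ≤ x * (x / 2) ^ 2 := by gcongr; exact besselJ_one_le_half hx
    _ ≤ 3 / 2 * (3 / 2 / 2) ^ 2 := by gcongr
    _ < 1 := by norm_num

lemma besselJ_zero_three_halves_mem_Icc : besselJ 0 (3 / 2) ∈ Icc (7 / 16 : ℝ) (529 / 1024) := by
  have hlower := besselPartialSum_le_besselJ 0 (N := 2) (x := 3 / 2) (by decide) (by decide)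
    (by norm_num)
  have hupper := besselJ_le_besselPartialSum 0 (N := 3) (x := 3 / 2) (by decide) (by norm_num)
  norm_num [besselPartialSum, Finset.sum_range_succ, Nat.factorial] at hlower hupper
  exact ⟨hlower, hupper⟩

lemma besselJ_one_three_halves_mem_Icc : besselJ 1 (3 / 2) ∈ Icc (69 / 128 : ℝ) (2289 / 4096) := by
  have hlower := besselPartialSum_le_besselJ 1 (N := 2) (x := 3 / 2) (by decide) (by decide)
    (by norm_num)
  have hupper := besselJ_le_besselPartialSum 1 (N := 3) (x := 3 / 2) (by decide) (by norm_num)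
  norm_num [besselPartialSum, Finset.sum_range_succ, Nat.factorial] at hlower hupper
  exact ⟨hlower, hupper⟩

lemma besselEnergy_one_three_halves_lt_one :
    besselEnergy (1 : ℤ) (besselJ 1) (fun x => (besselJ (1 - 1) x - besselJ (1 + 1) x) / 2) (3 / 2)
      < 1 := by
  obtain ⟨h₀, h₀'⟩ := besselJ_zero_three_halves_mem_Icc
  obtain ⟨h₁, h₁'⟩ := besselJ_one_three_halves_mem_Icc
  have hslope : 3 / 2 * ((besselJ (1 - 1) (3 / 2) - besselJ (1 + 1) (3 / 2)) / 2)
      + besselJ 1 (3 / 2) / 2 = 3 / 2 * besselJ 0 (3 / 2) - besselJ 1 (3 / 2) / 2 := by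
    have hrec := mul_besselJ_sub_one_add_besselJ_add_one 1 (3 / 2)
    rw [sub_self, Int.cast_one] at *
    linarith
  have hpotential : 3 / 2 * besselPotential (1 : ℤ) (3 / 2) = 1 := by
    norm_num [besselPotential]
  rw [besselEnergy_eq _ _ _ (by norm_num), hslope, hpotential, div_one]
  calc 3 / 2 * besselJ 1 (3 / 2) ^ 2 + (3 / 2 * besselJ 0 (3 / 2) - besselJ 1 (3 / 2) / 2) ^ 2
      ≤ 3 / 2 * (3 / 5) ^ 2 + (3 / 5) ^ 2 := by gcongr <;> linarith
    _ < 1 := by norm_num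

lemma mul_besselJ_one_sq_lt_one_of_ge {x : ℝ} (hx : 3 / 2 ≤ x) : x * besselJ 1 x ^ 2 < 1 := by
  have hanti := (isBesselSolution_besselJ 1).antitoneOn_besselEnergy (a := 3 / 2) (by norm_num)
    (by norm_num) (by norm_num)
  calc x * besselJ 1 x ^ 2 ≤ besselEnergy (1 : ℤ) (besselJ 1) _ x :=
        mul_sq_le_besselEnergy _ _ (by linarith) (by norm_num; nlinarith)
    _ ≤ besselEnergy (1 : ℤ) (besselJ 1) _ (3 / 2) := hanti self_mem_Ici hx hx
    _ < 1 := besselEnergy_one_three_halves_lt_one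

theorem abs_besselJ1_lt_inv_sqrt_general (x : ℝ) (hx : 0 < x) : |besselJ1 x| < 1 / √x := by
  have hmul : x * besselJ 1 x ^ 2 < 1 :=
    (le_total x (3 / 2)).elim (mul_besselJ_one_sq_lt_one_of_le hx) mul_besselJ_one_sq_lt_one_of_ge
  rw [← besselJ_one, one_div, ← sqrt_inv]
  exact (lt_sqrt (abs_nonneg _)).2 (by rwa [sq_abs, ← one_div, lt_div_iff₀' hx])

/-- For every real `x ≥ 1`, `|J₁(x)| < 1/√x`. -/
theorem abs_besselJ1_lt_inv_sqrt (x : ℝ) (hx : 1 ≤ x) :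
    |besselJ1 x| < 1 / Real.sqrt x :=
  abs_besselJ1_lt_inv_sqrt_general x (zero_lt_one.trans_le hx)

end
end
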